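/- Let (G = (V, E), τ, μ, c, γ) be a generalized network flow instance and let x ∈ ℝ^E satisfy 0 ≤ x_e ≤ μ_e for every e ∈ E. Let uv ∈ E^x be an edge of the residual graph G^x with u ≠ τ, and suppose that either v = τ or there exists a fractional augmenting path from v in G^x. Then height_x(u) ≤ c^x_{uv} + γ^x_{uv} · height_x(v). -/

import Mathlib

/-!
A fractional augmenting path `g` from `v` extends to one from `u` along a residual edge `uv`:
send one unit along `uv`, of which `γ^x uv` units arrive at `v`, and forward them by
`γ^x uv • g`. The excess is linear in the flow, so it is `1` at `u` and the contributions at `v`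
cancel (`isFracAug_prepend`); the cost is likewise linear and equals
`c^x uv + γ^x uv * cost g` (`augCost_prepend`). Taking the infimum over `g` gives the claim. When
`v = τ`, the zero flow plays the role of `g`. There are no self-loops, because a self-loop would
be anti-parallel to itself; hence `u ≠ v`.
-/

variable {V : Type}

/-- The residual graph `G^x`: `(u,v)` is a residual edge iff it is a forward edge
(`uv ∈ E` with `x uv < μ uv`) or a backward edge (`vu ∈ E` with `x vu > 0`). -/
def ResEdge (E : Finset (V × V)) (μ x : V × V → ℝ) (u v : V) : Prop :=
  ((u, v) ∈ E ∧ x (u, v) < μ (u, v)) ∨ ((v, u) ∈ E ∧ 0 < x (v, u))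

/-- The cost of a residual edge: `c uv` on forward edges, `0` on backward edges. -/
noncomputable def resCost [DecidableEq V] (E : Finset (V × V)) (c : V × V → ℝ) (u v : V) : ℝ :=
  if (u, v) ∈ E then c (u, v) else 0

/-- The gain of a residual edge: `γ uv` on forward edges, `1 / γ vu` on backward edges. -/
noncomputable def resGain [DecidableEq V] (E : Finset (V × V)) (γ : V × V → ℝ) (u v : V) : ℝ :=
  if (u, v) ∈ E then γ (u, v) else 1 / γ (v, u)

/-- The excess of `f : ℝ^{E^x}` at a vertex `w`, computed in the residual graph `G^x`:
`∑_{e ∈ δ⁺(w)} f e − ∑_{e ∈ δ⁻(w)} γ^x e ⬝ f e` (for `f` vanishing outside `E^x`). -/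
noncomputable def resExcess [Fintype V] [DecidableEq V] (E : Finset (V × V)) (γ : V × V → ℝ)
    (f : V × V → ℝ) (w : V) : ℝ :=
  (∑ v : V, f (w, v)) - ∑ u : V, resGain E γ u w * f (u, w)

/-- `f` is a fractional augmenting path from `s` in the residual graph `G^x`:
`f ≥ 0` is supported on residual edges, and its residual excess is `1` at `s` and `0` at
every vertex other than `s` and `τ`. -/
def IsFracAug [Fintype V] [DecidableEq V] (E : Finset (V × V)) (μ γ x : V × V → ℝ) (τ s : V)
    (f : V × V → ℝ) : Prop :=
  (∀ p, 0 ≤ f p) ∧ (∀ u v : V, ¬ ResEdge E μ x u v → f (u, v) = 0) ∧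
  resExcess E γ f s = 1 ∧ ∀ w : V, w ≠ s → w ≠ τ → resExcess E γ f w = 0

/-- The cost of a fractional augmenting path: `∑_{e ∈ E^x} c^x e ⬝ f e`. -/
noncomputable def augCost [Fintype V] [DecidableEq V] (E : Finset (V × V)) (c : V × V → ℝ)
    (f : V × V → ℝ) : ℝ :=
  ∑ p : V × V, resCost E c p.1 p.2 * f p

/-- `S` is the edge set of a simple directed path from `a` to `b` in the graph with
adjacency relation `Radj`. -/
def IsPathSupport (Radj : V → V → Prop) (a b : V) (S : Set (V × V)) : Prop :=
  ∃ (n : ℕ) (w : Fin (n + 1) → V), Function.Injective w ∧ w 0 = a ∧ w (Fin.last n) = b ∧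
    (∀ i : Fin n, Radj (w i.castSucc) (w i.succ)) ∧
    S = {p | ∃ i : Fin n, p = (w i.castSucc, w i.succ)}

/-- `S` is the edge set of an augmenting path from `s` (avoiding resp. reaching `τ`):
(a) a simple directed path from `s` to `τ`; or (b) a simple directed cycle containing `s`
but not `τ`; or (c) the union of a simple directed cycle containing neither `s` nor `τ`
and a simple directed path from `s` to the cycle, internally disjoint from the cycle. -/
def IsAugSupport (Radj : V → V → Prop) (τ s : V) (S : Set (V × V)) : Prop :=
  IsPathSupport Radj s τ S ∨
  (∃ (n : ℕ) (w : Fin (n + 2) → V), Function.Injective w ∧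
    (∃ i, w i = s) ∧ (∀ i, w i ≠ τ) ∧
    (∀ i : Fin (n + 2), Radj (w i) (w (i + 1))) ∧
    S = {p | ∃ i : Fin (n + 2), p = (w i, w (i + 1))}) ∨
  (∃ (n m : ℕ) (w : Fin (n + 2) → V) (u : Fin (m + 2) → V),
    Function.Injective w ∧ Function.Injective u ∧
    (∀ i, w i ≠ s) ∧ (∀ i, w i ≠ τ) ∧
    (∀ i : Fin (n + 2), Radj (w i) (w (i + 1))) ∧
    u 0 = s ∧ u (Fin.last (m + 1)) = w 0 ∧
    (∀ i : Fin (m + 1), Radj (u i.castSucc) (u i.succ)) ∧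
    (∀ i : Fin (m + 1), u i.castSucc ∉ Set.range w) ∧
    S = {p | ∃ i : Fin (n + 2), p = (w i, w (i + 1))} ∪
        {p | ∃ i : Fin (m + 1), p = (u i.castSucc, u i.succ)})

open scoped ENNReal

/-- `height_x(v)`: the infimum of the costs of fractional augmenting paths from `v` in
the residual graph `G^x` (`⊤` if none exists), with `height_x(τ) = 0`. -/
noncomputable def height [Fintype V] [DecidableEq V] (E : Finset (V × V))
    (μ c γ x : V × V → ℝ) (τ v : V) : ℝ≥0∞ :=
  if v = τ then 0
  else sInf ((fun f => ENNReal.ofReal (augCost E c f)) '' {f | IsFracAug E μ γ x τ v f})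

/-- The flow sending one unit along `uv` and forwarding the `a` units that arrive by `a • g`. -/
noncomputable def prepend [DecidableEq V] (u v : V) (a : ℝ) (g : V × V → ℝ) : V × V → ℝ :=
  fun p => (if p = (u, v) then 1 else 0) + a * g p

lemma resEdge_ne {E : Finset (V × V)} {μ x : V × V → ℝ} {u v : V}
    (hap : ∀ e ∈ E, (e.2, e.1) ∉ E) (huv : ResEdge E μ x u v) : u ≠ v := by
  rintro rfl
  rcases huv with ⟨h, -⟩ | ⟨h, -⟩ <;> exact hap _ h h

lemma resGain_pos [DecidableEq V] {E : Finset (V × V)} {μ γ x : V × V → ℝ} {u v : V}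
    (hγ : ∀ e ∈ E, 0 < γ e) (huv : ResEdge E μ x u v) : 0 < resGain E γ u v := by
  unfold resGain
  split_ifs with h
  · exact hγ _ h
  · rcases huv with ⟨h', -⟩ | ⟨h', -⟩
    · exact absurd h' h
    · exact one_div_pos.mpr (hγ _ h')

lemma augCost_prepend [Fintype V] [DecidableEq V] (E : Finset (V × V)) (c : V × V → ℝ)
    (u v : V) (a : ℝ) (g : V × V → ℝ) :
    augCost E c (prepend u v a g) = resCost E c u v + a * augCost E c g := by
  simp only [augCost, prepend, mul_add, Finset.sum_add_distrib, Finset.mul_sum]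
  congr 1
  · simp
  · exact Finset.sum_congr rfl fun p _ => by ring

lemma resExcess_prepend [Fintype V] [DecidableEq V] (E : Finset (V × V)) (γ : V × V → ℝ)
    (u v : V) (a : ℝ) (g : V × V → ℝ) (w : V) :
    resExcess E γ (prepend u v a g) w =
      (if w = u then 1 else 0) - (if w = v then resGain E γ u v else 0)
        + a * resExcess E γ g w := by
  have h1 : ∑ z : V, prepend u v a g (w, z) = (if w = u then 1 else 0) + a * ∑ z, g (w, z) := by
    simp only [prepend, Finset.sum_add_distrib, Finset.mul_sum, Prod.mk.injEq]
    by_cases h : w = u <;> simp [h]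
  have h2 : ∑ z : V, resGain E γ z w * prepend u v a g (z, w) =
      (if w = v then resGain E γ u v else 0) + a * ∑ z, resGain E γ z w * g (z, w) := by
    simp only [prepend, mul_add, Finset.sum_add_distrib, Finset.mul_sum, Prod.mk.injEq]
    congr 1
    · by_cases h : w = v <;> simp [h]
    · exact Finset.sum_congr rfl fun p _ => by ring
  simp only [resExcess, h1, h2]
  ring

/-- The excess hypothesis on `g` is imposed only away from `τ`, so that it covers both a fractional
augmenting path from `v ≠ τ` and the zero flow for `v = τ`. -/
lemma isFracAug_prepend [Fintype V] [DecidableEq V] {E : Finset (V × V)} {τ : V}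
    {μ γ x : V × V → ℝ} {u v : V} (hγ : ∀ e ∈ E, 0 < γ e) (hap : ∀ e ∈ E, (e.2, e.1) ∉ E)
    (hu : u ≠ τ) (huv : ResEdge E μ x u v) {g : V × V → ℝ} (hg0 : ∀ p, 0 ≤ g p)
    (hgs : ∀ a b : V, ¬ ResEdge E μ x a b → g (a, b) = 0)
    (hge : ∀ w, w ≠ τ → resExcess E γ g w = if w = v then 1 else 0) :
    IsFracAug E μ γ x τ u (prepend u v (resGain E γ u v) g) := by
  have hne := resEdge_ne hap huv
  have hpos := resGain_pos hγ huv
  refine ⟨fun p => ?_, fun a b hab => ?_, ?_, fun w hwu hwτ => ?_⟩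
  · have := mul_nonneg hpos.le (hg0 p)
    unfold prepend
    split_ifs <;> linarith
  · have : (a, b) ≠ (u, v) := by
      rintro h
      obtain ⟨rfl, rfl⟩ := Prod.mk.inj h
      exact hab huv
    simp [prepend, this, hgs a b hab]
  · simp [resExcess_prepend, hge u hu, hne]
  · rw [resExcess_prepend, hge w hwτ]
    by_cases h : w = v <;> simp [hwu, h, hne.symm]

/-- Let `(G = (V,E), τ, μ, c, γ)` be a generalized network flow instance and `0 ≤ x ≤ μ`.
Let `uv ∈ E^x` be a residual edge with `u ≠ τ`, and suppose `v = τ` or some fractional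
augmenting path from `v` exists in `G^x`.  Then
`height_x(u) ≤ c^x uv + γ^x uv ⬝ height_x(v)`. -/
theorem stmt12 [Fintype V] [DecidableEq V]
    (E : Finset (V × V)) (τ : V) (μ c γ : V × V → ℝ)
    (hμ : ∀ e ∈ E, 0 < μ e) (hc : ∀ e ∈ E, 0 ≤ c e) (hγ : ∀ e ∈ E, 0 < γ e)
    (hap : ∀ e ∈ E, (e.2, e.1) ∉ E)
    (x : V × V → ℝ) (hx : ∀ e ∈ E, 0 ≤ x e ∧ x e ≤ μ e)
    (u v : V) (hu : u ≠ τ)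
    (huv : ResEdge E μ x u v)
    (hex : v = τ ∨ ∃ g : V × V → ℝ, IsFracAug E μ γ x τ v g) :
    height E μ c γ x τ u
      ≤ ENNReal.ofReal (resCost E c u v)
        + ENNReal.ofReal (resGain E γ u v) * height E μ c γ x τ v := by
  have hpos := resGain_pos hγ huv
  -- Every admissible continuation `g` from `v` bounds the height of `u`.
  have key : ∀ g : V × V → ℝ, (∀ p, 0 ≤ g p) →
      (∀ a b : V, ¬ ResEdge E μ x a b → g (a, b) = 0) →
      (∀ w, w ≠ τ → resExcess E γ g w = if w = v then 1 else 0) →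
      height E μ c γ x τ u ≤ ENNReal.ofReal (resCost E c u v)
        + ENNReal.ofReal (resGain E γ u v) * ENNReal.ofReal (augCost E c g) := by
    intro g hg0 hgs hge
    rw [height, if_neg hu, ← ENNReal.ofReal_mul hpos.le]
    refine le_trans (sInf_le (Set.mem_image_of_mem _
      (isFracAug_prepend hγ hap hu huv hg0 hgs hge))) ?_
    simp only [augCost_prepend]
    exact ENNReal.ofReal_add_le
  by_cases hv : v = τ
  · have h := key 0 (fun _ => le_rfl) (fun _ _ _ => rfl) fun w hw => by
      rw [if_neg (hv ▸ hw)]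
      simp [resExcess]
    have h0 : augCost E c (0 : V × V → ℝ) = 0 := by simp [augCost]
    rw [height.eq_def E μ c γ x τ v, if_pos hv]
    simpa [h0] using h
  · rw [height.eq_def E μ c γ x τ v, if_neg hv, sInf_image]
    have hg0 : ENNReal.ofReal (resGain E γ u v) ≠ 0 := (ENNReal.ofReal_pos.mpr hpos).ne'
    simp only [ENNReal.mul_iInf_of_ne hg0 ENNReal.ofReal_ne_top, ENNReal.add_iInf₂]
    refine le_iInf₂ fun g hg => key g hg.1 hg.2.1 fun w hw => ?_
    split_ifs with h
    · exact h ▸ hg.2.2.1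
    · exact hg.2.2.2 w h hw
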